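/- Let λ₁, λ₂, u, v ∈ ℤ with gcd(u,v) = 1 and v dividing λ₁ − λ₂; let Λ = diag(λ₁, λ₂), M = [[1, u], [0, v]], and A = M·Λ·M⁻¹, and assume A ∈ M_2(ℤ) is non-singular with P(A) ≠ ∅ and P'(A) ≠ ∅. Assume every prime dividing λ₁ also divides λ₂, or every prime dividing λ₂ also divides λ₁. Then the group N⃗(X_A) = {T ∈ M_2(ℤ) : det T = ±1 and ∀ m ∈ ℕ ∃ k ∈ ℕ, A^{-m}·T·A^{k} ∈ M_2(ℤ)} (a group under matrix multiplication) is isomorphic as a group to the group of lower-triangular matrices in GL_2(ℤ), i.e., to {S ∈ M_2(ℤ) : S₁₂ = 0 and det S = ±1}. -/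

import Mathlib

open Matrix Polynomial

noncomputable section

/-- The matrix `A` viewed over `ℚ`. -/
def Aq {n : ℕ} (A : Matrix (Fin n) (Fin n) ℤ) : Matrix (Fin n) (Fin n) ℚ :=
  A.map (Int.cast : ℤ → ℚ)

/-- `P'(A)`: primes dividing `det A` such that `h_A ≢ x^n (mod p)`. -/
def Pbad {n : ℕ} (A : Matrix (Fin n) (Fin n) ℤ) : Set ℕ :=
  {p | p.Prime ∧ (p : ℤ) ∣ A.det ∧ A.charpoly.map (Int.castRingHom (ZMod p)) ≠ X ^ n}

/-- The matrix `M = [[1, u], [0, v]]` over `ℚ`. -/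
def M2q (u v : ℤ) : Matrix (Fin 2) (Fin 2) ℚ := !![1, (u : ℚ); 0, (v : ℚ)]

/-- Membership in the linear representation group `N⃗(X_A)`:
`det T = ±1` and for every `m` there is a `k` with `A⁻ᵐ T Aᵏ ∈ M_2(ℤ)`. -/
def Ncond (A T : Matrix (Fin 2) (Fin 2) ℤ) : Prop :=
  (T.det = 1 ∨ T.det = -1) ∧
    ∀ m : ℕ, ∃ k : ℕ, ∀ i j, ∃ z : ℤ,
      (((Aq A)⁻¹ ^ m * T.map (Int.cast : ℤ → ℚ) * (Aq A) ^ k) i j) = (z : ℚ)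

/-! The primes of `P'(A)` divide exactly one of the two eigenvalues, so by the radical hypothesis
we may call the eigenvalues `a`, `b` with `b ∣ a ^ K` and some prime `p` dividing `a` but not `b`.
Completing a primitive `b`-eigenvector to a basis conjugates `A` in `GL₂(ℤ)` to a lower triangular
`B` with diagonal `(a, b)`. Integrality of `A⁻ᵐ T Aᵏ` says `A ^ m ∣ T * A ^ k`, a condition
that is compatible with conjugation. For `B`, the entry in position `(0, 1)` shows that
`a ^ m ∣ T₀₁ * b ^ k`, so `T₀₁` is divisible by all powers of `p` and vanishes. Conversely, if
`T₀₁ = 0`, then `N = T - T₁₁` satisfies `N * B ^ k = a ^ k • N`, which `B ^ m` divides for large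
`k` because `det B = a * b` divides a power of `a`. -/

section AdicContinuity

variable {R : Type*} [Monoid R]

/-- `t` is `a`-adically continuous if left multiplication by `t` is continuous at `0` for the
topology whose basic neighbourhoods of `0` are the right ideals `a ^ m R`; note that `∣` is
divisibility on the left, `x ∣ y ↔ ∃ z, y = x * z`. For integer matrices this is the integrality
condition defining `N⃗(X_A)`. -/
def IsAdicallyContinuous (a t : R) : Prop :=
  ∀ m : ℕ, ∃ k : ℕ, a ^ m ∣ t * a ^ k

theorem isAdicallyContinuous_map_iff {S : Type*} [Monoid S] (e : R ≃* S) {a t : R} :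
    IsAdicallyContinuous (e a) (e t) ↔ IsAdicallyContinuous a t := by
  simp only [IsAdicallyContinuous, ← map_pow, ← map_mul, map_dvd_iff]

theorem isAdicallyContinuous_units_conj_iff (g : Rˣ) {a t : R} :
    IsAdicallyContinuous (↑g⁻¹ * a * ↑g) (↑g⁻¹ * t * ↑g) ↔ IsAdicallyContinuous a t := by
  simpa [ConjAct.units_smul_def] using isAdicallyContinuous_map_iff
    (MulDistribMulAction.toMulEquiv R (ConjAct.toConjAct g⁻¹))

end AdicContinuity

section EigenvectorCriteria

variable {n R : Type*} [Fintype n] [DecidableEq n] [CommRing R] {A T : Matrix n n R} {a b : R}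

theorem pow_mulVec_of_mulVec_eq_smul {w : n → R} (hw : A *ᵥ w = b • w) (k : ℕ) :
    A ^ k *ᵥ w = b ^ k • w := by
  induction k with
  | zero => simp
  | succ k ih => rw [pow_succ, ← mulVec_mulVec, hw, mulVec_smul, ih, smul_smul, pow_succ']

theorem vecMul_pow_of_vecMul_eq_smul {r : n → R} (hr : r ᵥ* A = a • r) (k : ℕ) :
    r ᵥ* A ^ k = a ^ k • r := by
  rw [← mulVec_transpose, transpose_pow]
  exact pow_mulVec_of_mulVec_eq_smul ((mulVec_transpose A r).trans hr) k

theorem IsAdicallyContinuous.dotProduct_mulVec_eq_zero [IsDomain R] [WfDvdMonoid R] {r w : n → R}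
    (h : IsAdicallyContinuous A T) (hr : r ᵥ* A = a • r) (hw : A *ᵥ w = b • w) {p : R}
    (hp : Prime p) (hpa : p ∣ a) (hpb : ¬p ∣ b) : r ⬝ᵥ T *ᵥ w = 0 := by
  have pow_dvd (m : ℕ) : p ^ m ∣ r ⬝ᵥ T *ᵥ w := by
    obtain ⟨k, Z, hZ⟩ := h m
    have key : (r ⬝ᵥ T *ᵥ w) * b ^ k = a ^ m * (r ⬝ᵥ Z *ᵥ w) := calc
      (r ⬝ᵥ T *ᵥ w) * b ^ k = r ⬝ᵥ (T * A ^ k) *ᵥ w := by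
        rw [← mulVec_mulVec, pow_mulVec_of_mulVec_eq_smul hw, mulVec_smul, dotProduct_smul,
          smul_eq_mul, mul_comm]
      _ = r ⬝ᵥ (A ^ m * Z) *ᵥ w := by rw [hZ]
      _ = a ^ m * (r ⬝ᵥ Z *ᵥ w) := by
        rw [← mulVec_mulVec, dotProduct_mulVec, vecMul_pow_of_vecMul_eq_smul hr, smul_dotProduct,
          smul_eq_mul]
    refine hp.pow_dvd_of_dvd_mul_right m (mt hp.dvd_of_dvd_pow hpb) (?_ : p ^ m ∣ _ * b ^ k)
    exact key ▸ (pow_dvd_pow_of_dvd hpa m).mul_right _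
  by_contra hne
  obtain ⟨m, hm⟩ := FiniteMultiplicity.of_prime_left hp hne
  exact hm (pow_dvd _)

theorem dvd_det_smul (A N : Matrix n n R) : A ∣ A.det • N :=
  ⟨A.adjugate * N, by rw [← mul_assoc, mul_adjugate, smul_mul_assoc, one_mul]⟩

theorem isAdicallyContinuous_of_sub_smul_one_mul_eq_smul {c : R}
    (h : (T - c • 1) * A = a • (T - c • 1)) {K : ℕ} (hK : A.det ∣ a ^ K) :
    IsAdicallyContinuous A T := by
  intro m
  set N := T - c • 1 with hN
  have mul_pow_eq (k : ℕ) : N * A ^ k = a ^ k • N := by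
    have semiconj : SemiconjBy N A (a • 1) := by rw [SemiconjBy, h, smul_one_mul]
    rw [(semiconj.pow_right k).eq, _root_.smul_pow, one_pow, smul_one_mul]
  obtain ⟨d, hd⟩ : (A ^ m).det ∣ a ^ (m + K * m) := by
    rw [det_pow, pow_add, pow_mul]
    exact (pow_dvd_pow_of_dvd hK m).mul_left _
  have split : T * A ^ (m + K * m) = A ^ m * (c • A ^ (K * m)) + (A ^ m).det • d • N := by
    rw [smul_smul, ← hd, ← mul_pow_eq, mul_smul_comm, ← pow_add, hN, sub_mul, smul_one_mul,
      add_sub_cancel]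
  exact ⟨m + K * m, split ▸ dvd_add (dvd_mul_right _ _) (dvd_det_smul _ _)⟩

end EigenvectorCriteria

section LowerTriangular

variable {R : Type*} [CommRing R]

/-- The group of lower triangular matrices in `GL₂(R)`. -/
def lowerTriangularSubgroup (R : Type*) [CommRing R] : Subgroup (Matrix (Fin 2) (Fin 2) R)ˣ where
  carrier := {S | (S : Matrix (Fin 2) (Fin 2) R) 0 1 = 0}
  one_mem' := by simp
  mul_mem' {S T} hS hT := by
    simp_all [mul_apply, Fin.sum_univ_two]
  inv_mem' {S} hS := by
    simp_all [inv_def, adjugate_fin_two]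

theorem mem_lowerTriangularSubgroup {S : (Matrix (Fin 2) (Fin 2) R)ˣ} :
    S ∈ lowerTriangularSubgroup R ↔ (S : Matrix (Fin 2) (Fin 2) R) 0 1 = 0 :=
  Iff.rfl

theorem charpoly_of_apply_zero_one_eq_zero {B : Matrix (Fin 2) (Fin 2) R} (hB : B 0 1 = 0) :
    B.charpoly = (X - C (B 0 0)) * (X - C (B 1 1)) := by
  simp [charpoly, det_fin_two, hB]

theorem det_eq_mul_of_charpoly_eq {A : Matrix (Fin 2) (Fin 2) R} {a b : R}
    (hA : A.charpoly = (X - C a) * (X - C b)) : A.det = a * b := by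
  simp [det_eq_sign_charpoly_coeff, hA, coeff_zero_eq_eval_zero]

theorem isAdicallyContinuous_iff_apply_zero_one_eq_zero [IsDomain R] [WfDvdMonoid R]
    {B T : Matrix (Fin 2) (Fin 2) R} (hB : B 0 1 = 0) {p : R} (hp : Prime p) (hp0 : p ∣ B 0 0)
    (hp1 : ¬p ∣ B 1 1) {K : ℕ} (hK : B 1 1 ∣ B 0 0 ^ K) :
    IsAdicallyContinuous B T ↔ T 0 1 = 0 := by
  constructor
  · intro h
    have hr : Pi.single 0 1 ᵥ* B = B 0 0 • Pi.single 0 1 := by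
      ext j; fin_cases j <;> simp [hB]
    have hw : B *ᵥ Pi.single 1 1 = B 1 1 • Pi.single 1 1 := by
      ext i; fin_cases i <;> simp [hB]
    simpa using h.dotProduct_mulVec_eq_zero hr hw hp hp0 hp1
  · intro hT
    have hN : (T - T 1 1 • 1) * B = B 0 0 • (T - T 1 1 • 1) := by
      ext i j
      fin_cases i <;> fin_cases j <;> simp [mul_apply, hB, hT, mul_comm]
    have hdet : B.det ∣ B 0 0 ^ (K + 1) := by
      rw [det_fin_two, hB, zero_mul, sub_zero, pow_succ']
      exact mul_dvd_mul_left _ hK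
    exact isAdicallyContinuous_of_sub_smul_one_mul_eq_smul hN hdet

theorem exists_isCoprime_mulVec_eq_smul [IsDomain R] [IsBezout R] {A : Matrix (Fin 2) (Fin 2) R}
    {b : R} (hb : A.charpoly.IsRoot b) : ∃ x y, IsCoprime x y ∧ A *ᵥ ![x, y] = b • ![x, y] := by
  obtain ⟨w, hw0, hw⟩ : ∃ w ≠ 0, (scalar (Fin 2) b - A) *ᵥ w = 0 := by
    rw [exists_mulVec_eq_zero_iff, ← eval_charpoly, hb.eq_zero]
  classical
  let := IsBezout.toGCDDomain R
  obtain ⟨x, y, hx, hy, hxy⟩ := extract_gcd (w 0) (w 1)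
  have hw' : w = gcd (w 0) (w 1) • ![x, y] := by
    ext i; fin_cases i <;> simpa
  have hd : gcd (w 0) (w 1) ≠ 0 := fun h ↦ hw0 (by rw [hw', h, zero_smul])
  rw [hw', mulVec_smul, smul_eq_zero_iff_right hd, sub_mulVec, sub_eq_zero] at hw
  exact ⟨x, y, (gcd_isUnit_iff x y).1 hxy, by simpa using hw.symm⟩

theorem exists_units_conj_lowerTriangular [IsDomain R] [IsBezout R]
    {A : Matrix (Fin 2) (Fin 2) R} {a b : R} (hA : A.charpoly = (X - C a) * (X - C b)) :
    ∃ (g : (Matrix (Fin 2) (Fin 2) R)ˣ) (B : Matrix (Fin 2) (Fin 2) R),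
      B = g⁻¹.val * A * g.val ∧ B 0 1 = 0 ∧ B 0 0 = a ∧ B 1 1 = b := by
  obtain ⟨x, y, hxy, hw⟩ := exists_isCoprime_mulVec_eq_smul (A := A) (b := b) (by simp [hA])
  obtain ⟨g, rfl, rfl⟩ := hxy.exists_SL2_col 1
  let u : (Matrix (Fin 2) (Fin 2) R)ˣ := SpecialLinearGroup.toGL g
  set B := u⁻¹.val * A * u.val with hB
  have hcol : B *ᵥ Pi.single 1 1 = b • Pi.single 1 1 := by
    have hu : u.val *ᵥ Pi.single 1 1 = ![g.1 0 1, g.1 1 1] := by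
      ext i; fin_cases i <;> simp [u]
    rw [hB, ← mulVec_mulVec, ← mulVec_mulVec, hu, hw, mulVec_smul, ← hu, mulVec_mulVec,
      Units.inv_mul, one_mulVec]
  have h01 : B 0 1 = 0 := by simpa using congrFun hcol 0
  have h11 : B 1 1 = b := by simpa using congrFun hcol 1
  have h00 : B 0 0 = a := by
    have hchar : (X - C (B 0 0)) * (X - C b) = (X - C a) * (X - C b) := by
      rw [← hA, ← h11, ← charpoly_of_apply_zero_one_eq_zero h01, hB, coe_units_inv,
        charpoly_units_conj']
    simpa using mul_right_cancel₀ (X_sub_C_ne_zero b) hchar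
  exact ⟨u, B, hB, h01, h00, h11⟩

end LowerTriangular

theorem exists_dvd_pow_of_forall_prime_dvd {M : Type*} [CommMonoidWithZero M]
    [UniqueFactorizationMonoid M] {a b : M} (ha : a ≠ 0)
    (h : ∀ p, Prime p → p ∣ a → p ∣ b) : ∃ K : ℕ, a ∣ b ^ K := by
  induction a using UniqueFactorizationMonoid.induction_on_prime with
  | h₁ => exact absurd rfl ha
  | h₂ x hx => exact ⟨0, hx.dvd⟩
  | h₃ x p hx hp ih =>
    obtain ⟨K, hK⟩ := ih hx fun q hq hqx ↦ h q hq (hqx.mul_left p)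
    exact ⟨K + 1, pow_succ' b K ▸ mul_dvd_mul (h p hp (dvd_mul_right p x)) hK⟩

section IntegerMatrices

variable {n : ℕ} {A B : Matrix (Fin n) (Fin n) ℤ}

theorem Aq_eq_mapMatrix (A : Matrix (Fin n) (Fin n) ℤ) : Aq A = (Int.castRingHom ℚ).mapMatrix A :=
  rfl

theorem Aq_injective : Function.Injective (Aq : Matrix (Fin n) (Fin n) ℤ → _) :=
  map_injective Int.cast_injective

theorem isUnit_det_Aq (hA : A.det ≠ 0) : IsUnit (Aq A).det := by
  rw [isUnit_iff_ne_zero, Aq_eq_mapMatrix, ← RingHom.map_det]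
  exact Int.cast_ne_zero.2 hA

theorem forall_inv_Aq_mul_Aq_apply_eq_intCast_iff (hA : A.det ≠ 0) :
    (∀ i j, ∃ z : ℤ, ((Aq A)⁻¹ * Aq B) i j = z) ↔ A ∣ B := by
  constructor
  · intro h
    choose Z hZ using h
    refine ⟨of Z, Aq_injective ?_⟩
    have hinv : (Aq A)⁻¹ * Aq B = Aq (of Z) := by
      ext i j; exact hZ i j
    rw [Aq_eq_mapMatrix (A * _), map_mul, ← Aq_eq_mapMatrix, ← Aq_eq_mapMatrix, ← hinv,
      mul_nonsing_inv_cancel_left _ _ (isUnit_det_Aq hA)]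
  · rintro ⟨Z, rfl⟩ i j
    rw [Aq_eq_mapMatrix (A * Z), map_mul, ← Aq_eq_mapMatrix, ← Aq_eq_mapMatrix,
      nonsing_inv_mul_cancel_left _ _ (isUnit_det_Aq hA)]
    exact ⟨Z i j, rfl⟩

theorem charpoly_eq_of_Aq_eq_conj (hA : A.det ≠ 0) {M : Matrix (Fin n) (Fin n) ℚ}
    (h : Aq A = M * Aq B * M⁻¹) : A.charpoly = B.charpoly := by
  have hM : IsUnit M := by
    rw [isUnit_iff_isUnit_det]
    have hdet := isUnit_det_Aq hA
    rw [h, det_mul, det_mul] at hdet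
    exact isUnit_of_mul_isUnit_left (isUnit_of_mul_isUnit_left hdet)
  obtain ⟨M, rfl⟩ := hM
  apply Polynomial.map_injective _ (RingHom.injective_int (Int.castRingHom ℚ))
  rw [← charpoly_map, ← charpoly_map]
  exact (congrArg charpoly h).trans (charpoly_units_conj M (Aq B))

end IntegerMatrices

section LinearRepresentationGroup

variable {A : Matrix (Fin 2) (Fin 2) ℤ} {a b : ℤ}

theorem ncond_iff_isAdicallyContinuous (hA : A.det ≠ 0) (T : (Matrix (Fin 2) (Fin 2) ℤ)ˣ) :
    Ncond A T ↔ IsAdicallyContinuous A T := by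
  have hdet : (T : Matrix (Fin 2) (Fin 2) ℤ).det = 1 ∨ (T : Matrix (Fin 2) (Fin 2) ℤ).det = -1 :=
    Int.isUnit_iff.1 ((isUnit_iff_isUnit_det _).1 T.isUnit)
  have hAq (m k : ℕ) : (Aq A)⁻¹ ^ m * (T : Matrix (Fin 2) (Fin 2) ℤ).map Int.cast * Aq A ^ k =
      (Aq (A ^ m))⁻¹ * Aq (T.val * A ^ k) := by
    simp only [Aq_eq_mapMatrix, map_mul, map_pow, inv_pow', mul_assoc]
    rfl
  simp only [Ncond, and_iff_right hdet, hAq, IsAdicallyContinuous]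
  refine forall_congr' fun m ↦ exists_congr fun k ↦ ?_
  exact forall_inv_Aq_mul_Aq_apply_eq_intCast_iff (det_pow A m ▸ pow_ne_zero m hA)

theorem charpoly_eq_of_Aq_eq_conj_diagonal (hA : A.det ≠ 0) {M : Matrix (Fin 2) (Fin 2) ℚ}
    (h : Aq A = M * !![(a : ℚ), 0; 0, (b : ℚ)] * M⁻¹) :
    A.charpoly = (X - C a) * (X - C b) := by
  have hΛ : Aq !![a, 0; 0, b] = !![(a : ℚ), 0; 0, (b : ℚ)] := by
    ext i j; fin_cases i <;> fin_cases j <;> simp [Aq]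
  rw [← hΛ] at h
  rw [charpoly_eq_of_Aq_eq_conj hA h]
  exact charpoly_of_apply_zero_one_eq_zero rfl

theorem not_dvd_and_dvd_of_mem_Pbad (hchar : A.charpoly = (X - C a) * (X - C b)) {p : ℕ}
    (hp : p ∈ Pbad A) : ¬((p : ℤ) ∣ a ∧ (p : ℤ) ∣ b) := by
  rintro ⟨hpa, hpb⟩
  have ha : (a : ZMod p) = 0 := (ZMod.intCast_zmod_eq_zero_iff_dvd a p).2 hpa
  have hb : (b : ZMod p) = 0 := (ZMod.intCast_zmod_eq_zero_iff_dvd b p).2 hpb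
  refine hp.2.2 ?_
  rw [hchar, Polynomial.map_mul, Polynomial.map_sub, Polynomial.map_sub, map_X, map_C, map_C,
    eq_intCast, eq_intCast, ha, hb, C_0, sub_zero, pow_two]

theorem exists_ncond_iff_conj_mem_lowerTriangularSubgroup (hA : A.det ≠ 0)
    (hchar : A.charpoly = (X - C a) * (X - C b)) (hP' : (Pbad A).Nonempty)
    (hrad : ∀ p : ℕ, p.Prime → (p : ℤ) ∣ b → (p : ℤ) ∣ a) :
    ∃ g : (Matrix (Fin 2) (Fin 2) ℤ)ˣ, ∀ T : (Matrix (Fin 2) (Fin 2) ℤ)ˣ,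
      Ncond A T ↔ g⁻¹ * T * g ∈ lowerTriangularSubgroup ℤ := by
  obtain ⟨p, hp⟩ := hP'
  have hprime : Prime (p : ℤ) := Nat.prime_iff_prime_int.1 hp.1
  have hdet : A.det = a * b := det_eq_mul_of_charpoly_eq hchar
  have hpb : ¬(p : ℤ) ∣ b := fun hpb ↦
    not_dvd_and_dvd_of_mem_Pbad hchar hp ⟨hrad p hp.1 hpb, hpb⟩
  have hpa : (p : ℤ) ∣ a := (hprime.dvd_or_dvd (hdet ▸ hp.2.1)).resolve_right hpb
  have hb : b ≠ 0 := right_ne_zero_of_mul (hdet ▸ hA)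
  obtain ⟨K, hK⟩ : ∃ K : ℕ, b ∣ a ^ K := exists_dvd_pow_of_forall_prime_dvd hb fun q hq hqb ↦ by
    rw [← Int.natAbs_dvd] at hqb ⊢
    exact hrad _ (Int.prime_iff_natAbs_prime.1 hq) hqb
  obtain ⟨g, B, hB, h01, rfl, rfl⟩ := exists_units_conj_lowerTriangular hchar
  refine ⟨g, fun T ↦ ?_⟩
  rw [ncond_iff_isAdicallyContinuous hA, ← isAdicallyContinuous_units_conj_iff g, ← hB,
    isAdicallyContinuous_iff_apply_zero_one_eq_zero h01 hprime hpa hpb hK]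
  rfl

end LinearRepresentationGroup

theorem stmt19_general (a b : ℤ) (A : Matrix (Fin 2) (Fin 2) ℤ) (hA : A.det ≠ 0)
    (hchar : A.charpoly = (X - C a) * (X - C b))
    (hP' : (Pbad A).Nonempty)
    (hrad : (∀ p : ℕ, p.Prime → (p : ℤ) ∣ a → (p : ℤ) ∣ b) ∨
      (∀ p : ℕ, p.Prime → (p : ℤ) ∣ b → (p : ℤ) ∣ a)) :
    ∃ H L : Subgroup (Matrix (Fin 2) (Fin 2) ℤ)ˣ,
      (∀ T : (Matrix (Fin 2) (Fin 2) ℤ)ˣ, T ∈ H ↔ Ncond A (T : Matrix (Fin 2) (Fin 2) ℤ)) ∧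
      (∀ S : (Matrix (Fin 2) (Fin 2) ℤ)ˣ, S ∈ L ↔ (S : Matrix (Fin 2) (Fin 2) ℤ) 0 1 = 0) ∧
      Nonempty (H ≃* L) := by
  obtain ⟨g, hg⟩ : ∃ g : (Matrix (Fin 2) (Fin 2) ℤ)ˣ, ∀ T : (Matrix (Fin 2) (Fin 2) ℤ)ˣ,
      Ncond A T ↔ g⁻¹ * T * g ∈ lowerTriangularSubgroup ℤ := by
    rcases hrad with hab | hba
    · rw [mul_comm] at hchar
      exact exists_ncond_iff_conj_mem_lowerTriangularSubgroup hA hchar hP' hab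
    · exact exists_ncond_iff_conj_mem_lowerTriangularSubgroup hA hchar hP' hba
  refine ⟨(lowerTriangularSubgroup ℤ).map (MulAut.conj g).toMonoidHom, lowerTriangularSubgroup ℤ,
    fun T ↦ ?_, fun _ ↦ mem_lowerTriangularSubgroup,
    ⟨((MulAut.conj g).subgroupMap (lowerTriangularSubgroup ℤ)).symm⟩⟩
  rw [hg, Subgroup.mem_map_equiv, MulAut.conj_symm_apply]

/-- in case (c), `N⃗(X_A)` is isomorphic to the group of
lower-triangular matrices in `GL_2(ℤ)`. -/
theorem stmt19 (lam1 lam2 u v : ℤ) (hcop : Int.gcd u v = 1) (hdvd : v ∣ lam1 - lam2)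
    (A : Matrix (Fin 2) (Fin 2) ℤ) (hA : A.det ≠ 0)
    (hAform : Aq A = M2q u v * !![(lam1 : ℚ), 0; 0, (lam2 : ℚ)] * (M2q u v)⁻¹)
    (hP : ∃ p : ℕ, p.Prime ∧ (p : ℤ) ∣ A.det)
    (hP' : (Pbad A).Nonempty)
    (hrad : (∀ p : ℕ, p.Prime → (p : ℤ) ∣ lam1 → (p : ℤ) ∣ lam2) ∨
      (∀ p : ℕ, p.Prime → (p : ℤ) ∣ lam2 → (p : ℤ) ∣ lam1)) :
    ∃ H L : Subgroup (Matrix (Fin 2) (Fin 2) ℤ)ˣ,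
      (∀ T : (Matrix (Fin 2) (Fin 2) ℤ)ˣ, T ∈ H ↔ Ncond A (T : Matrix (Fin 2) (Fin 2) ℤ)) ∧
      (∀ S : (Matrix (Fin 2) (Fin 2) ℤ)ˣ, S ∈ L ↔ (S : Matrix (Fin 2) (Fin 2) ℤ) 0 1 = 0) ∧
      Nonempty (H ≃* L) := by
  exact stmt19_general lam1 lam2 A hA (charpoly_eq_of_Aq_eq_conj_diagonal hA hAform) hP' hrad
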